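/- Let A be a differential graded Poisson algebra over a field k. In the smash product A # U(A) (a differential graded algebra since A is a left U(A)-module differential graded algebra), the two-sided ideal generated by the elements 1#(ab) - a#b - (-1)^{|a||b|} b#a, for all homogeneous a,b (taken in A on the left of # and in its copy 𝔸 ⊆ U(A) on the right of #), is a differential graded ideal; consequently the quotient A^E := (A # U(A))/(1#(ab) - a#b - (-1)^{|a||b|} b#a) is a differential graded algebra. -/

import Mathlib

open scoped TensorProduct

noncomputable section

namespace DGPaper

universe u

/-- A differential graded Lie algebra structure on a `k`-vector space `V`. -/
structure DGLAOn (k : Type u) [Field k] (V : Type u) [AddCommGroup V] [Module k V] where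
  gr : ℤ → Submodule k V
  decomp : DirectSum.Decomposition gr
  br : V →ₗ[k] V →ₗ[k] V
  br_mem : ∀ {i j : ℤ} {a b : V}, a ∈ gr i → b ∈ gr j → br a b ∈ gr (i + j)
  br_antisymm : ∀ {i j : ℤ} {a b : V}, a ∈ gr i → b ∈ gr j →
    br a b = -(((-1 : k) ^ (i * j)) • br b a)
  br_jacobi : ∀ {i j l : ℤ} {a b c : V}, a ∈ gr i → b ∈ gr j → c ∈ gr l →
    br a (br b c) = br (br a b) c + ((-1 : k) ^ (i * j)) • br b (br a c)
  d : V →ₗ[k] V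
  d_mem : ∀ {i : ℤ} {a : V}, a ∈ gr i → d a ∈ gr (i + 1)
  d_sq : ∀ a : V, d (d a) = 0
  d_br : ∀ {i j : ℤ} {a b : V}, a ∈ gr i → b ∈ gr j →
    d (br a b) = br (d a) b + ((-1 : k) ^ i) • br a (d b)

/-- A differential graded (associative, unital) algebra structure on a `k`-vector space `N`. -/
structure DGAOn (k : Type u) [Field k] (N : Type u) [AddCommGroup N] [Module k N] where
  gr : ℤ → Submodule k N
  decomp : DirectSum.Decomposition gr
  mul : N →ₗ[k] N →ₗ[k] N
  one : N
  one_mem : one ∈ gr 0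
  mul_mem : ∀ {i j : ℤ} {a b : N}, a ∈ gr i → b ∈ gr j → mul a b ∈ gr (i + j)
  mul_assoc : ∀ a b c : N, mul (mul a b) c = mul a (mul b c)
  one_mul : ∀ a : N, mul one a = a
  mul_one : ∀ a : N, mul a one = a
  d : N →ₗ[k] N
  d_mem : ∀ {i : ℤ} {a : N}, a ∈ gr i → d a ∈ gr (i + 1)
  d_sq : ∀ a : N, d (d a) = 0
  d_mul : ∀ {i j : ℤ} {a b : N}, a ∈ gr i → b ∈ gr j →
    d (mul a b) = mul (d a) b + ((-1 : k) ^ i) • mul a (d b)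

/-- A differential graded Poisson algebra structure on a `k`-vector space `M`. -/
structure DGPAOn (k : Type u) [Field k] (M : Type u) [AddCommGroup M] [Module k M] where
  gr : ℤ → Submodule k M
  decomp : DirectSum.Decomposition gr
  mul : M →ₗ[k] M →ₗ[k] M
  one : M
  one_mem : one ∈ gr 0
  mul_mem : ∀ {i j : ℤ} {a b : M}, a ∈ gr i → b ∈ gr j → mul a b ∈ gr (i + j)
  mul_assoc : ∀ a b c : M, mul (mul a b) c = mul a (mul b c)
  one_mul : ∀ a : M, mul one a = a
  mul_one : ∀ a : M, mul a one = a
  mul_comm : ∀ {i j : ℤ} {a b : M}, a ∈ gr i → b ∈ gr j →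
    mul a b = ((-1 : k) ^ (i * j)) • mul b a
  br : M →ₗ[k] M →ₗ[k] M
  br_mem : ∀ {i j : ℤ} {a b : M}, a ∈ gr i → b ∈ gr j → br a b ∈ gr (i + j)
  br_antisymm : ∀ {i j : ℤ} {a b : M}, a ∈ gr i → b ∈ gr j →
    br a b = -(((-1 : k) ^ (i * j)) • br b a)
  br_jacobi : ∀ {i j l : ℤ} {a b c : M}, a ∈ gr i → b ∈ gr j → c ∈ gr l →
    br a (br b c) = br (br a b) c + ((-1 : k) ^ (i * j)) • br b (br a c)
  br_deriv : ∀ {i j l : ℤ} {a b c : M}, a ∈ gr i → b ∈ gr j → c ∈ gr l →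
    br a (mul b c) = mul (br a b) c + ((-1 : k) ^ (i * j)) • mul b (br a c)
  d : M →ₗ[k] M
  d_mem : ∀ {i : ℤ} {a : M}, a ∈ gr i → d a ∈ gr (i + 1)
  d_sq : ∀ a : M, d (d a) = 0
  d_br : ∀ {i j : ℤ} {a b : M}, a ∈ gr i → b ∈ gr j →
    d (br a b) = br (d a) b + ((-1 : k) ^ i) • br a (d b)
  d_mul : ∀ {i j : ℤ} {a b : M}, a ∈ gr i → b ∈ gr j →
    d (mul a b) = mul (d a) b + ((-1 : k) ^ i) • mul a (d b)

section Defs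

variable {k : Type u} [Field k]

/-- The differential graded Lie algebra underlying a differential graded Poisson algebra. -/
def DGPAOn.toLie {M : Type u} [AddCommGroup M] [Module k M] (P : DGPAOn k M) :
    DGLAOn k M where
  gr := P.gr
  decomp := P.decomp
  br := P.br
  br_mem := P.br_mem
  br_antisymm := P.br_antisymm
  br_jacobi := P.br_jacobi
  d := P.d
  d_mem := P.d_mem
  d_sq := P.d_sq
  d_br := P.d_br

section Maps

variable {M N : Type u} [AddCommGroup M] [Module k M] [AddCommGroup N] [Module k N]

/-- A morphism of differential graded algebras (degree-0, multiplicative, unital,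
commuting with the differentials). -/
def IsDGAHom (E : DGAOn k M) (F : DGAOn k N) (f : M →ₗ[k] N) : Prop :=
  (∀ {n : ℤ} {x : M}, x ∈ E.gr n → f x ∈ F.gr n) ∧
  (∀ x y : M, f (E.mul x y) = F.mul (f x) (f y)) ∧
  f E.one = F.one ∧
  ∀ x : M, f (E.d x) = F.d (f x)

/-- A morphism of differential graded Poisson algebras. -/
def IsDGPAHom (P : DGPAOn k M) (Q : DGPAOn k N) (f : M →ₗ[k] N) : Prop :=
  (∀ {n : ℤ} {x : M}, x ∈ P.gr n → f x ∈ Q.gr n) ∧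
  (∀ x y : M, f (P.mul x y) = Q.mul (f x) (f y)) ∧
  f P.one = Q.one ∧
  (∀ x : M, f (P.d x) = Q.d (f x)) ∧
  ∀ x y : M, f (P.br x y) = Q.br (f x) (f y)

end Maps

section Tensor

variable {A B : Type u} [AddCommGroup A] [Module k A] [AddCommGroup B] [Module k B]

/-- `R` is the tensor product differential graded Poisson algebra structure on `A ⊗[k] B`
induced by `P` and `Q`. -/
def IsTensorDGPA (P : DGPAOn k A) (Q : DGPAOn k B) (R : DGPAOn k (A ⊗[k] B)) : Prop :=
  (∀ n : ℤ, R.gr n = Submodule.span k {z : A ⊗[k] B |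
      ∃ (i j : ℤ) (a : A) (b : B), i + j = n ∧ a ∈ P.gr i ∧ b ∈ Q.gr j ∧ z = a ⊗ₜ[k] b}) ∧
  R.one = P.one ⊗ₜ[k] Q.one ∧
  (∀ {i j i' j' : ℤ} {a a' : A} {b b' : B},
      a ∈ P.gr i → b ∈ Q.gr j → a' ∈ P.gr i' → b' ∈ Q.gr j' →
    R.mul (a ⊗ₜ[k] b) (a' ⊗ₜ[k] b') = ((-1 : k) ^ (i' * j)) • (P.mul a a' ⊗ₜ[k] Q.mul b b')) ∧
  (∀ {i j : ℤ} {a : A} {b : B}, a ∈ P.gr i → b ∈ Q.gr j →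
    R.d (a ⊗ₜ[k] b) = P.d a ⊗ₜ[k] b + ((-1 : k) ^ i) • (a ⊗ₜ[k] Q.d b)) ∧
  (∀ {i j i' j' : ℤ} {a a' : A} {b b' : B},
      a ∈ P.gr i → b ∈ Q.gr j → a' ∈ P.gr i' → b' ∈ Q.gr j' →
    R.br (a ⊗ₜ[k] b) (a' ⊗ₜ[k] b') =
      ((-1 : k) ^ (i' * j)) • (P.br a a' ⊗ₜ[k] Q.mul b b' + P.mul a a' ⊗ₜ[k] Q.br b b'))

/-- `G` is the tensor product differential graded algebra structure on `A ⊗[k] B`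
induced by `E` and `F` (with the Koszul sign rule). -/
def IsTensorDGA (E : DGAOn k A) (F : DGAOn k B) (G : DGAOn k (A ⊗[k] B)) : Prop :=
  (∀ n : ℤ, G.gr n = Submodule.span k {z : A ⊗[k] B |
      ∃ (i j : ℤ) (x : A) (y : B), i + j = n ∧ x ∈ E.gr i ∧ y ∈ F.gr j ∧ z = x ⊗ₜ[k] y}) ∧
  G.one = E.one ⊗ₜ[k] F.one ∧
  (∀ {i j i' j' : ℤ} {x x' : A} {y y' : B},
      x ∈ E.gr i → y ∈ F.gr j → x' ∈ E.gr i' → y' ∈ F.gr j' →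
    G.mul (x ⊗ₜ[k] y) (x' ⊗ₜ[k] y') = ((-1 : k) ^ (i' * j)) • (E.mul x x' ⊗ₜ[k] F.mul y y')) ∧
  (∀ {i j : ℤ} {x : A} {y : B}, x ∈ E.gr i → y ∈ F.gr j →
    G.d (x ⊗ₜ[k] y) = E.d x ⊗ₜ[k] y + ((-1 : k) ^ i) • (x ⊗ₜ[k] F.d y))

end Tensor

section Env

variable {M : Type u} [AddCommGroup M] [Module k M]

/-- The defining relations of the universal enveloping algebra `A^e` of a differential
graded Poisson algebra, imposed on the tensor algebra of `M × M`; the first copy of `M`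
gives the generators `m_a`, the second copy the generators `h_a`. -/
inductive EnvRel (P : DGPAOn k M) :
    TensorAlgebra k (M × M) → TensorAlgebra k (M × M) → Prop
  | relone : EnvRel P (TensorAlgebra.ι k ((P.one, 0) : M × M)) 1
  | relmul (a b : M) :
      EnvRel P (TensorAlgebra.ι k ((P.mul a b, 0) : M × M))
        (TensorAlgebra.ι k ((a, 0) : M × M) * TensorAlgebra.ι k ((b, 0) : M × M))
  | relhmul {i j : ℤ} {a b : M} (ha : a ∈ P.gr i) (hb : b ∈ P.gr j) :
      EnvRel P (TensorAlgebra.ι k ((0, P.mul a b) : M × M))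
        (TensorAlgebra.ι k ((a, 0) : M × M) * TensorAlgebra.ι k ((0, b) : M × M) +
          ((-1 : k) ^ (i * j)) •
            (TensorAlgebra.ι k ((b, 0) : M × M) * TensorAlgebra.ι k ((0, a) : M × M)))
  | relmbr {i j : ℤ} {a b : M} (ha : a ∈ P.gr i) (hb : b ∈ P.gr j) :
      EnvRel P (TensorAlgebra.ι k ((P.br a b, 0) : M × M))
        (TensorAlgebra.ι k ((0, a) : M × M) * TensorAlgebra.ι k ((b, 0) : M × M) -
          ((-1 : k) ^ (i * j)) •
            (TensorAlgebra.ι k ((b, 0) : M × M) * TensorAlgebra.ι k ((0, a) : M × M)))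
  | relhbr {i j : ℤ} {a b : M} (ha : a ∈ P.gr i) (hb : b ∈ P.gr j) :
      EnvRel P (TensorAlgebra.ι k ((0, P.br a b) : M × M))
        (TensorAlgebra.ι k ((0, a) : M × M) * TensorAlgebra.ι k ((0, b) : M × M) -
          ((-1 : k) ^ (i * j)) •
            (TensorAlgebra.ι k ((0, b) : M × M) * TensorAlgebra.ι k ((0, a) : M × M)))

/-- The universal enveloping algebra `A^e` of a differential graded Poisson algebra,
as a quotient of the tensor algebra on two copies of `A`. -/
abbrev Env (P : DGPAOn k M) : Type u := RingQuot (EnvRel P)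

/-- The generators `m_a` of `A^e`. -/
def mgen (P : DGPAOn k M) : M →ₗ[k] Env P :=
  (RingQuot.mkAlgHom k (EnvRel P)).toLinearMap ∘ₗ
    ((TensorAlgebra.ι k : (M × M) →ₗ[k] TensorAlgebra k (M × M)) ∘ₗ LinearMap.inl k M M)

/-- The generators `h_a` of `A^e`. -/
def hgen (P : DGPAOn k M) : M →ₗ[k] Env P :=
  (RingQuot.mkAlgHom k (EnvRel P)).toLinearMap ∘ₗ
    ((TensorAlgebra.ι k : (M × M) →ₗ[k] TensorAlgebra k (M × M)) ∘ₗ LinearMap.inr k M M)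

/-- `E` is the differential graded algebra structure on `A^e`, with the ring
multiplication of `A^e`, grading `|m_a| = |h_a| = |a|` and differential determined by
`∂(m_a) = m_{d a}`, `∂(h_a) = h_{d a}` and the graded Leibniz rule. -/
def IsEnvDGA (P : DGPAOn k M) (E : DGAOn k (Env P)) : Prop :=
  (∀ x y : Env P, E.mul x y = x * y) ∧
  E.one = 1 ∧
  (∀ {i : ℤ} {a : M}, a ∈ P.gr i → mgen P a ∈ E.gr i) ∧
  (∀ {i : ℤ} {a : M}, a ∈ P.gr i → hgen P a ∈ E.gr i) ∧
  (∀ a : M, E.d (mgen P a) = mgen P (P.d a)) ∧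
  (∀ a : M, E.d (hgen P a) = hgen P (P.d a))

end Env

section Lie

variable {V : Type u} [AddCommGroup V] [Module k V]

/-- The defining relations of the universal enveloping algebra of a differential graded
Lie algebra. -/
inductive LieRel (L : DGLAOn k V) : TensorAlgebra k V → TensorAlgebra k V → Prop
  | rel {i j : ℤ} {a b : V} (ha : a ∈ L.gr i) (hb : b ∈ L.gr j) :
      LieRel L
        (TensorAlgebra.ι k a * TensorAlgebra.ι k b -
          ((-1 : k) ^ (i * j)) • (TensorAlgebra.ι k b * TensorAlgebra.ι k a))
        (TensorAlgebra.ι k (L.br a b))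

/-- The universal enveloping algebra `U(L)` of a differential graded Lie algebra `L`. -/
abbrev ULie (L : DGLAOn k V) : Type u := RingQuot (LieRel L)

/-- The canonical map `L → U(L)`. -/
def uGen (L : DGLAOn k V) : V →ₗ[k] ULie L :=
  (RingQuot.mkAlgHom k (LieRel L)).toLinearMap ∘ₗ TensorAlgebra.ι k

/-- `E` is the differential graded algebra structure of `U(L)`. -/
def IsULieDGA (L : DGLAOn k V) (E : DGAOn k (ULie L)) : Prop :=
  (∀ x y : ULie L, E.mul x y = x * y) ∧
  E.one = 1 ∧
  (∀ {i : ℤ} {a : V}, a ∈ L.gr i → uGen L a ∈ E.gr i) ∧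
  (∀ a : V, E.d (uGen L a) = uGen L (L.d a))

/-- The graded-symmetry relations defining the graded symmetric algebra of `L`. -/
inductive SymRel (L : DGLAOn k V) : TensorAlgebra k V → TensorAlgebra k V → Prop
  | rel {i j : ℤ} {a b : V} (ha : a ∈ L.gr i) (hb : b ∈ L.gr j) :
      SymRel L (TensorAlgebra.ι k a * TensorAlgebra.ι k b)
        (((-1 : k) ^ (i * j)) • (TensorAlgebra.ι k b * TensorAlgebra.ι k a))

/-- The graded symmetric algebra `𝕊L` of a differential graded Lie algebra `L`. -/
abbrev SymAlg (L : DGLAOn k V) : Type u := RingQuot (SymRel L)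

/-- The canonical map `L → 𝕊L`. -/
def sGen (L : DGLAOn k V) : V →ₗ[k] SymAlg L :=
  (RingQuot.mkAlgHom k (SymRel L)).toLinearMap ∘ₗ TensorAlgebra.ι k

/-- `R` is the differential graded Poisson algebra structure on `𝕊L` with differential
extending `d` and bracket extending the Lie bracket of `L` as a graded biderivation. -/
def IsSymDGPA (L : DGLAOn k V) (R : DGPAOn k (SymAlg L)) : Prop :=
  (∀ x y : SymAlg L, R.mul x y = x * y) ∧
  R.one = 1 ∧
  (∀ {i : ℤ} {a : V}, a ∈ L.gr i → sGen L a ∈ R.gr i) ∧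
  (∀ a : V, R.d (sGen L a) = sGen L (L.d a)) ∧
  (∀ a b : V, R.br (sGen L a) (sGen L b) = sGen L (L.br a b))

/-- `S` is the graded semidirect product differential graded Lie algebra `L ⋊ L`. -/
def IsSemidirect (L : DGLAOn k V) (S : DGLAOn k (V × V)) : Prop :=
  (∀ n : ℤ, S.gr n = (L.gr n).prod (L.gr n)) ∧
  (∀ z : V × V, S.d z = (L.d z.1, L.d z.2)) ∧
  (∀ {i j : ℤ} {x₁ x₂ y₁ y₂ : V}, x₁ ∈ L.gr i → x₂ ∈ L.gr i → y₁ ∈ L.gr j → y₂ ∈ L.gr j →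
    S.br (x₁, x₂) (y₁, y₂) =
      (L.br x₂ y₁ - ((-1 : k) ^ (i * j)) • L.br y₂ x₁, L.br x₂ y₂))

end Lie

section Smash

variable {M : Type u} [AddCommGroup M] [Module k M]

/-- The generators `1#(ab) - a#b - (-1)^{|a||b|} b#a` of the ideal defining `A^E`
inside the smash product `A # U(A)`. -/
def smashGens (P : DGPAOn k M) : Set (M ⊗[k] ULie P.toLie) :=
  {z | ∃ (i j : ℤ) (a b : M), a ∈ P.gr i ∧ b ∈ P.gr j ∧
    z = P.one ⊗ₜ[k] uGen P.toLie (P.mul a b) - a ⊗ₜ[k] uGen P.toLie b -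
        ((-1 : k) ^ (i * j)) • (b ⊗ₜ[k] uGen P.toLie a)}

/-- The two-sided ideal generated by a set `T` in a differential graded algebra `S`. -/
def idealGen {N : Type u} [AddCommGroup N] [Module k N] (S : DGAOn k N) (T : Set N) :
    Submodule k N :=
  sInf {I : Submodule k N | T ⊆ I ∧ ∀ x ∈ I, ∀ y : N, S.mul x y ∈ I ∧ S.mul y x ∈ I}

/-- `S` is the smash product differential graded algebra `A # U(A)`. -/
def IsSmash (P : DGPAOn k M) (EU : DGAOn k (ULie P.toLie))
    (S : DGAOn k (M ⊗[k] ULie P.toLie)) : Prop :=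
  S.one = P.one ⊗ₜ[k] (1 : ULie P.toLie) ∧
  (∀ a b : M, S.mul (a ⊗ₜ[k] (1 : ULie P.toLie)) (b ⊗ₜ[k] (1 : ULie P.toLie)) =
      P.mul a b ⊗ₜ[k] (1 : ULie P.toLie)) ∧
  (∀ u v : ULie P.toLie, S.mul (P.one ⊗ₜ[k] u) (P.one ⊗ₜ[k] v) = P.one ⊗ₜ[k] (u * v)) ∧
  (∀ (a : M) (u : ULie P.toLie), S.mul (a ⊗ₜ[k] (1 : ULie P.toLie)) (P.one ⊗ₜ[k] u) =
      a ⊗ₜ[k] u) ∧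
  (∀ {i j : ℤ} {c b : M}, c ∈ P.gr i → b ∈ P.gr j →
    S.mul (P.one ⊗ₜ[k] uGen P.toLie c) (b ⊗ₜ[k] (1 : ULie P.toLie)) =
      P.br c b ⊗ₜ[k] (1 : ULie P.toLie) + ((-1 : k) ^ (i * j)) • (b ⊗ₜ[k] uGen P.toLie c)) ∧
  (∀ {i j : ℤ} {a : M} {u : ULie P.toLie}, a ∈ P.gr i → u ∈ EU.gr j →
      a ⊗ₜ[k] u ∈ S.gr (i + j)) ∧
  (∀ {i : ℤ} {a : M}, a ∈ P.gr i → ∀ u : ULie P.toLie,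
    S.d (a ⊗ₜ[k] u) = P.d a ⊗ₜ[k] u + ((-1 : k) ^ i) • (a ⊗ₜ[k] EU.d u))

/-- `R` is the quotient differential graded algebra structure of `S` by the ideal `I`. -/
def IsQuotDGA {N : Type u} [AddCommGroup N] [Module k N] (S : DGAOn k N)
    (I : Submodule k N) (R : DGAOn k (N ⧸ I)) : Prop :=
  (∀ n : ℤ, R.gr n = Submodule.map I.mkQ (S.gr n)) ∧
  R.one = I.mkQ S.one ∧
  (∀ x y : N, R.mul (I.mkQ x) (I.mkQ y) = I.mkQ (S.mul x y)) ∧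
  (∀ x : N, R.d (I.mkQ x) = I.mkQ (S.d x))

end Smash

section Op

variable {M N : Type u} [AddCommGroup M] [Module k M] [AddCommGroup N] [Module k N]

/-- `P'` is the opposite differential graded Poisson algebra of `P` (the product is
unchanged by graded commutativity, the bracket is negated). -/
def IsOpDGPA (P P' : DGPAOn k M) : Prop :=
  P'.gr = P.gr ∧ (∀ x y : M, P'.mul x y = P.mul x y) ∧ P'.one = P.one ∧ P'.d = P.d ∧
  (∀ x y : M, P'.br x y = - P.br x y)

/-- `E'` is the opposite differential graded algebra of `E` (with the Koszul sign). -/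
def IsOpDGA (E E' : DGAOn k N) : Prop :=
  E'.gr = E.gr ∧ E'.one = E.one ∧ E'.d = E.d ∧
  (∀ {i j : ℤ} {x y : N}, x ∈ E.gr i → y ∈ E.gr j →
    E'.mul x y = ((-1 : k) ^ (i * j)) • E.mul y x)

end Op

section UEnv

variable {M N : Type u} [AddCommGroup M] [Module k M] [AddCommGroup N] [Module k N]

/-- A pair `(f, g)` where `f : A → D` is a differential graded algebra map and
`g : A → D_L` is a differential graded Lie algebra map (into the graded commutator Lie
structure of `D`), satisfying the two compatibility conditions of the universal property
of the universal enveloping algebra of a differential graded Poisson algebra. -/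
def UEPair (P : DGPAOn k M) (D : DGAOn k N) (f g : M →ₗ[k] N) : Prop :=
  (∀ {n : ℤ} {x : M}, x ∈ P.gr n → f x ∈ D.gr n) ∧
  (∀ {n : ℤ} {x : M}, x ∈ P.gr n → g x ∈ D.gr n) ∧
  (∀ a b : M, f (P.mul a b) = D.mul (f a) (f b)) ∧
  f P.one = D.one ∧
  (∀ a : M, f (P.d a) = D.d (f a)) ∧
  (∀ a : M, g (P.d a) = D.d (g a)) ∧
  (∀ {i j : ℤ} {a b : M}, a ∈ P.gr i → b ∈ P.gr j →
    g (P.br a b) = D.mul (g a) (g b) - ((-1 : k) ^ (i * j)) • D.mul (g b) (g a)) ∧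
  (∀ {i j : ℤ} {a b : M}, a ∈ P.gr i → b ∈ P.gr j →
    f (P.br a b) = D.mul (g a) (f b) - ((-1 : k) ^ (i * j)) • D.mul (f b) (g a)) ∧
  (∀ {i j : ℤ} {a b : M}, a ∈ P.gr i → b ∈ P.gr j →
    g (P.mul a b) = D.mul (f a) (g b) + ((-1 : k) ^ (i * j)) • D.mul (f b) (g a))

/-- `(E, α, β)` is a universal enveloping algebra of the differential graded Poisson
algebra `P`. -/
def IsUEnv (P : DGPAOn k M) (E : DGAOn k N) (α β : M →ₗ[k] N) : Prop :=
  UEPair P E α β ∧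
  ∀ (D' : Type u) [AddCommGroup D'] [Module k D'] (D : DGAOn k D') (f g : M →ₗ[k] D'),
    UEPair P D f g →
    ∃! φ : N →ₗ[k] D',
      IsDGAHom E D φ ∧ (∀ a : M, φ (α a) = f a) ∧ (∀ a : M, φ (β a) = g a)

end UEnv

section IdealsQuotients

variable {M : Type u} [AddCommGroup M] [Module k M]

/-- `B` is a differential graded Poisson ideal of `P`. -/
def IsDGPIdeal (P : DGPAOn k M) (B : Submodule k M) : Prop :=
  (B = ⨆ n : ℤ, B ⊓ P.gr n) ∧
  (∀ x ∈ B, P.d x ∈ B) ∧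
  (∀ x ∈ B, ∀ a : M, P.mul x a ∈ B) ∧
  (∀ x ∈ B, ∀ a : M, P.mul a x ∈ B) ∧
  (∀ x ∈ B, ∀ a : M, P.br a x ∈ B)

/-- `B` is a differential graded Poisson subalgebra of `P`. -/
def IsDGPSubalg (P : DGPAOn k M) (B : Submodule k M) : Prop :=
  (B = ⨆ n : ℤ, B ⊓ P.gr n) ∧ P.one ∈ B ∧
  (∀ x ∈ B, ∀ y ∈ B, P.mul x y ∈ B) ∧
  (∀ x ∈ B, P.d x ∈ B) ∧
  (∀ x ∈ B, ∀ y ∈ B, P.br x y ∈ B)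

/-- `R` is the quotient differential graded Poisson algebra structure on `M ⧸ B`. -/
def IsQuotDGPA (P : DGPAOn k M) (B : Submodule k M) (R : DGPAOn k (M ⧸ B)) : Prop :=
  (∀ n : ℤ, R.gr n = Submodule.map B.mkQ (P.gr n)) ∧
  R.one = B.mkQ P.one ∧
  (∀ x y : M, R.mul (B.mkQ x) (B.mkQ y) = B.mkQ (P.mul x y)) ∧
  (∀ x : M, R.d (B.mkQ x) = B.mkQ (P.d x)) ∧
  (∀ x y : M, R.br (B.mkQ x) (B.mkQ y) = B.mkQ (P.br x y))

/-- `S` is the differential graded Poisson algebra structure induced on a differential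
graded Poisson subalgebra `B` of `P`. -/
def IsSubDGPA (P : DGPAOn k M) (B : Submodule k M) (S : DGPAOn k B) : Prop :=
  (∀ n : ℤ, S.gr n = Submodule.comap B.subtype (P.gr n)) ∧
  ((S.one : M) = P.one) ∧
  (∀ x y : B, (S.mul x y : M) = P.mul (x : M) (y : M)) ∧
  (∀ x : B, (S.d x : M) = P.d (x : M)) ∧
  (∀ x y : B, (S.br x y : M) = P.br (x : M) (y : M))

/-- The cocycles `ker d` of a differential graded Poisson algebra. -/
def Cocycles (P : DGPAOn k M) : Submodule k M := LinearMap.ker P.d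

/-- The coboundaries `im d`, viewed inside the cocycles. -/
def CobIn (P : DGPAOn k M) : Submodule k (Cocycles P) :=
  Submodule.comap (Cocycles P).subtype (LinearMap.range P.d)

/-- The cohomology `H(A) = ker d / im d` of a differential graded Poisson algebra. -/
abbrev Cohom (P : DGPAOn k M) : Type u := Cocycles P ⧸ CobIn P

/-- The class map `ker d → H(A)`. -/
def cohCls (P : DGPAOn k M) : Cocycles P →ₗ[k] Cohom P := (CobIn P).mkQ

/-- `R` is the graded Poisson algebra structure on the cohomology of `P` (a differential
graded Poisson algebra structure with zero differential, with the induced grading,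
product and bracket). -/
def IsCohomDGPA (P : DGPAOn k M) (R : DGPAOn k (Cohom P)) : Prop :=
  R.d = 0 ∧
  (∀ n : ℤ, R.gr n =
    Submodule.map (cohCls P) (Submodule.comap (Cocycles P).subtype (P.gr n))) ∧
  (∀ h : P.one ∈ Cocycles P, R.one = cohCls P ⟨P.one, h⟩) ∧
  (∀ (a b : Cocycles P) (h : P.mul (a : M) (b : M) ∈ Cocycles P),
    R.mul (cohCls P a) (cohCls P b) = cohCls P ⟨P.mul (a : M) (b : M), h⟩) ∧
  (∀ (a b : Cocycles P) (h : P.br (a : M) (b : M) ∈ Cocycles P),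
    R.br (cohCls P a) (cohCls P b) = cohCls P ⟨P.br (a : M) (b : M), h⟩)

end IdealsQuotients

end Defs

section ModuleDefs

variable {k : Type u} [Field k]

/-- A left differential graded module structure on `X` over the differential graded
algebra `E`. -/
structure DGModOn {N : Type u} [AddCommGroup N] [Module k N] (E : DGAOn k N)
    (X : Type u) [AddCommGroup X] [Module k X] where
  grm : ℤ → Submodule k X
  decomp : DirectSum.Decomposition grm
  act : N →ₗ[k] X →ₗ[k] X
  act_one : ∀ x : X, act E.one x = x
  act_mul : ∀ (r s : N) (x : X), act (E.mul r s) x = act r (act s x)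
  act_mem : ∀ {i j : ℤ} {r : N} {x : X}, r ∈ E.gr i → x ∈ grm j → act r x ∈ grm (i + j)
  dm : X →ₗ[k] X
  dm_mem : ∀ {i : ℤ} {x : X}, x ∈ grm i → dm x ∈ grm (i + 1)
  dm_sq : ∀ x : X, dm (dm x) = 0
  dm_act : ∀ {i : ℤ} {r : N}, r ∈ E.gr i → ∀ x : X,
    dm (act r x) = act (E.d r) x + ((-1 : k) ^ i) • act r (dm x)

/-- A left differential graded Poisson module structure on `X` over the differential
graded Poisson algebra `P`. -/
structure DGPModOn {M : Type u} [AddCommGroup M] [Module k M] (P : DGPAOn k M)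
    (X : Type u) [AddCommGroup X] [Module k X] where
  grm : ℤ → Submodule k X
  decomp : DirectSum.Decomposition grm
  act : M →ₗ[k] X →ₗ[k] X
  act_one : ∀ x : X, act P.one x = x
  act_mul : ∀ (a b : M) (x : X), act (P.mul a b) x = act a (act b x)
  act_mem : ∀ {i j : ℤ} {a : M} {x : X}, a ∈ P.gr i → x ∈ grm j → act a x ∈ grm (i + j)
  dm : X →ₗ[k] X
  dm_mem : ∀ {i : ℤ} {x : X}, x ∈ grm i → dm x ∈ grm (i + 1)
  dm_sq : ∀ x : X, dm (dm x) = 0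
  dm_act : ∀ {i : ℤ} {a : M}, a ∈ P.gr i → ∀ x : X,
    dm (act a x) = act (P.d a) x + ((-1 : k) ^ i) • act a (dm x)
  bact : M →ₗ[k] X →ₗ[k] X
  bact_mem : ∀ {i j : ℤ} {a : M} {x : X}, a ∈ P.gr i → x ∈ grm j → bact a x ∈ grm (i + j)
  bact_amod : ∀ {i j : ℤ} {a b : M}, a ∈ P.gr i → b ∈ P.gr j → ∀ x : X,
    bact a (act b x) = act (P.br a b) x + ((-1 : k) ^ (i * j)) • act b (bact a x)
  bact_mulact : ∀ {i j : ℤ} {a b : M}, a ∈ P.gr i → b ∈ P.gr j → ∀ x : X,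
    bact (P.mul a b) x = act a (bact b x) + ((-1 : k) ^ (i * j)) • act b (bact a x)
  bact_jacobi : ∀ {i j : ℤ} {a b : M}, a ∈ P.gr i → b ∈ P.gr j → ∀ x : X,
    bact a (bact b x) = bact (P.br a b) x + ((-1 : k) ^ (i * j)) • bact b (bact a x)
  dm_bact : ∀ {i : ℤ} {a : M}, a ∈ P.gr i → ∀ x : X,
    dm (bact a x) = bact (P.d a) x + ((-1 : k) ^ i) • bact a (dm x)

/-- A morphism of left differential graded modules. -/
def IsDGModHom {N X Y : Type u} [AddCommGroup N] [Module k N]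
    [AddCommGroup X] [Module k X] [AddCommGroup Y] [Module k Y]
    {E : DGAOn k N} (W : DGModOn E X) (W' : DGModOn E Y) (f : X →ₗ[k] Y) : Prop :=
  (∀ {n : ℤ} {x : X}, x ∈ W.grm n → f x ∈ W'.grm n) ∧
  (∀ x : X, f (W.dm x) = W'.dm (f x)) ∧
  (∀ (r : N) (x : X), f (W.act r x) = W'.act r (f x))

/-- A morphism of left differential graded Poisson modules. -/
def IsDGPModHom {M X Y : Type u} [AddCommGroup M] [Module k M]
    [AddCommGroup X] [Module k X] [AddCommGroup Y] [Module k Y]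
    {P : DGPAOn k M} (V : DGPModOn P X) (V' : DGPModOn P Y) (f : X →ₗ[k] Y) : Prop :=
  (∀ {n : ℤ} {x : X}, x ∈ V.grm n → f x ∈ V'.grm n) ∧
  (∀ x : X, f (V.dm x) = V'.dm (f x)) ∧
  (∀ (a : M) (x : X), f (V.act a x) = V'.act a (f x)) ∧
  (∀ (a : M) (x : X), f (V.bact a x) = V'.bact a (f x))

/-- The correspondence between a differential graded Poisson module structure over `P`
and a differential graded module structure over `A^e` on the same space. -/
def ModCorr {M X : Type u} [AddCommGroup M] [Module k M] [AddCommGroup X] [Module k X]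
    {P : DGPAOn k M} {E : DGAOn k (Env P)}
    (V : DGPModOn P X) (W : DGModOn E X) : Prop :=
  W.grm = V.grm ∧ W.dm = V.dm ∧
  (∀ (a : M) (x : X), W.act (mgen P a) x = V.act a x) ∧
  (∀ (a : M) (x : X), W.act (hgen P a) x = V.bact a x)

end ModuleDefs

/-!
The differential sends the generator attached to a homogeneous pair `(a, b)` to a linear
combination of the generators attached to `(d a, b)` and `(a, d b)`. In any differential graded
algebra, the span of those homogeneous elements of an ideal whose differential is again in the
ideal is itself a two-sided ideal, by the graded Leibniz rule. Here it contains the generators, so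
it is the whole ideal, which is therefore homogeneous and stable under the differential.
-/

section GradedQuotient

open DirectSum

variable {ι R N : Type*} [DecidableEq ι] [Ring R] [AddCommGroup N] [Module R N]
  (ℳ : ι → Submodule R N) [Decomposition ℳ] {I : Submodule R N}

variable (I) in
/-- The map `N → ⨁ i, (image of ℳ i in N ⧸ I)` sending an element to the family of classes of
its homogeneous components. -/
def decomposeMkQ : N →ₗ[R] ⨁ i, (ℳ i).map I.mkQ :=
  lmap (fun i ↦ I.mkQ.submoduleMap (ℳ i)) ∘ₗ (decomposeLinearEquiv ℳ).toLinearMap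

theorem decomposeMkQ_coe {i : ι} (x : ℳ i) :
    decomposeMkQ ℳ I x = lof R ι _ i (I.mkQ.submoduleMap (ℳ i) x) := by
  simp [decomposeMkQ]

theorem le_ker_decomposeMkQ (hI : I ≤ ⨆ i, I ⊓ ℳ i) :
    I ≤ LinearMap.ker (decomposeMkQ ℳ I) := by
  refine hI.trans (iSup_le fun i x ⟨hxI, hxi⟩ ↦ ?_)
  have hx : I.mkQ.submoduleMap (ℳ i) ⟨x, hxi⟩ = 0 :=
    Subtype.ext ((Submodule.Quotient.mk_eq_zero I).2 hxI)
  rw [LinearMap.mem_ker, decomposeMkQ_coe ℳ ⟨x, hxi⟩, hx, map_zero]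

variable (I) in
theorem decomposeMkQ_surjective : Function.Surjective (decomposeMkQ ℳ I) :=
  ((lmap_surjective _).2 fun i ↦ I.mkQ.submoduleMap_surjective (ℳ i)).comp
    (decomposeLinearEquiv ℳ).surjective

theorem coeLinearMap_decomposeMkQ (x : N) :
    DirectSum.coeLinearMap (fun i ↦ (ℳ i).map I.mkQ) (decomposeMkQ ℳ I x) = I.mkQ x := by
  suffices DirectSum.coeLinearMap (fun i ↦ (ℳ i).map I.mkQ) ∘ₗ decomposeMkQ ℳ I = I.mkQ from
    DFunLike.congr_fun this x
  refine decompose_lhom_ext ℳ fun i ↦ LinearMap.ext fun x ↦ ?_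
  simp only [LinearMap.comp_apply, Submodule.subtype_apply, decomposeMkQ_coe, coeLinearMap_lof]
  rfl

theorem isInternal_map_mkQ (hI : I ≤ ⨆ i, I ⊓ ℳ i) :
    IsInternal fun i ↦ (ℳ i).map I.mkQ := by
  refine ⟨(injective_iff_map_eq_zero _).2 fun z hz ↦ ?_, fun q ↦ ?_⟩
  · obtain ⟨x, rfl⟩ := decomposeMkQ_surjective ℳ I z
    have hx : I.mkQ x = 0 := (coeLinearMap_decomposeMkQ ℳ x).symm.trans hz
    exact le_ker_decomposeMkQ ℳ hI ((Submodule.Quotient.mk_eq_zero I).1 hx)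
  · obtain ⟨x, rfl⟩ := I.mkQ_surjective q
    exact ⟨decomposeMkQ ℳ I x, coeLinearMap_decomposeMkQ ℳ x⟩

end GradedQuotient

theorem apply_mem_iSup_of_mem {ι κ ν R M N Q : Type*} [CommSemiring R] [AddCommMonoid M]
    [AddCommMonoid N] [AddCommMonoid Q] [Module R M] [Module R N] [Module R Q]
    (f : M →ₗ[R] N →ₗ[R] Q) {p : ι → Submodule R M} {q : κ → Submodule R N}
    {r : ν → Submodule R Q}
    (hf : ∀ i j, ∀ x ∈ p i, ∀ y ∈ q j, ∃ l, f x y ∈ r l) {x : M} {y : N}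
    (hx : x ∈ ⨆ i, p i) (hy : y ∈ ⨆ j, q j) : f x y ∈ ⨆ l, r l := by
  suffices Submodule.map₂ f (⨆ i, p i) (⨆ j, q j) ≤ ⨆ l, r l from
    this (Submodule.apply_mem_map₂ f hx hy)
  simp only [Submodule.map₂_iSup_left, Submodule.map₂_iSup_right, iSup_le_iff,
    Submodule.map₂_le]
  intro j i x hx y hy
  obtain ⟨l, hl⟩ := hf i j x hx y hy
  exact Submodule.mem_iSup_of_mem l hl

section DGIdeal

variable {k : Type u} [Field k] {N : Type u} [AddCommGroup N] [Module k N]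

/-- A differential graded ideal of a differential graded algebra: a two-sided ideal which is
homogeneous (spanned by its homogeneous elements) and stable under the differential. -/
structure IsDGIdeal (S : DGAOn k N) (I : Submodule k N) : Prop where
  le_iSup_inf_gr : I ≤ ⨆ n, I ⊓ S.gr n
  d_mem : ∀ x ∈ I, S.d x ∈ I
  mul_mem_right : ∀ x ∈ I, ∀ y, S.mul x y ∈ I
  mul_mem_left : ∀ x ∈ I, ∀ y, S.mul y x ∈ I

namespace IsDGIdeal

variable {S : DGAOn k N} {I : Submodule k N}

/-- The quotient of a differential graded algebra by a differential graded ideal. -/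
def quotient (hI : IsDGIdeal S I) : DGAOn k (N ⧸ I) where
  gr n := (S.gr n).map I.mkQ
  decomp := letI := S.decomp; (isInternal_map_mkQ S.gr hI.le_iSup_inf_gr).chooseDecomposition
  mul := (S.mul.compr₂ I.mkQ).liftQ₂ I I
    (fun x hx ↦ LinearMap.ext fun y ↦
      (Submodule.Quotient.mk_eq_zero I).2 (hI.mul_mem_right x hx y))
    (fun y hy ↦ LinearMap.ext fun x ↦
      (Submodule.Quotient.mk_eq_zero I).2 (hI.mul_mem_left y hy x))
  one := I.mkQ S.one
  one_mem := Submodule.mem_map_of_mem S.one_mem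
  mul_mem := by
    rintro i j _ _ ⟨a, ha, rfl⟩ ⟨b, hb, rfl⟩
    exact Submodule.mem_map_of_mem (S.mul_mem ha hb)
  mul_assoc := by
    rintro ⟨a⟩ ⟨b⟩ ⟨c⟩
    exact congrArg I.mkQ (S.mul_assoc a b c)
  one_mul := by
    rintro ⟨a⟩
    exact congrArg I.mkQ (S.one_mul a)
  mul_one := by
    rintro ⟨a⟩
    exact congrArg I.mkQ (S.mul_one a)
  d := I.mapQ I S.d hI.d_mem
  d_mem := by
    rintro i _ ⟨a, ha, rfl⟩
    exact Submodule.mem_map_of_mem (S.d_mem ha)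
  d_sq := by
    rintro ⟨a⟩
    exact congrArg I.mkQ (S.d_sq a)
  d_mul := by
    rintro i j _ _ ⟨a, ha, rfl⟩ ⟨b, hb, rfl⟩
    exact congrArg I.mkQ (S.d_mul ha hb)

theorem isQuotDGA_quotient (hI : IsDGIdeal S I) : IsQuotDGA S I hI.quotient :=
  ⟨fun _ ↦ rfl, rfl, fun _ _ ↦ rfl, fun _ ↦ rfl⟩

end IsDGIdeal

variable (S : DGAOn k N) {T : Set N}

theorem DGAOn.iSup_gr_eq_top : ⨆ n, S.gr n = ⊤ :=
  letI := S.decomp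
  (DirectSum.Decomposition.isInternal S.gr).submodule_iSup_eq_top

theorem subset_idealGen : T ⊆ idealGen S T :=
  fun _ ht ↦ Submodule.mem_sInf.2 fun _ hI ↦ hI.1 ht

theorem idealGen_mul_mem_right {x : N} (hx : x ∈ idealGen S T) (y : N) :
    S.mul x y ∈ idealGen S T :=
  Submodule.mem_sInf.2 fun I hI ↦ (hI.2 x (Submodule.mem_sInf.1 hx I hI) y).1

theorem idealGen_mul_mem_left {x : N} (hx : x ∈ idealGen S T) (y : N) :
    S.mul y x ∈ idealGen S T :=
  Submodule.mem_sInf.2 fun I hI ↦ (hI.2 x (Submodule.mem_sInf.1 hx I hI) y).2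

theorem idealGen_le_iSup {C : ℤ → Submodule k N} (hT : ∀ t ∈ T, ∃ n, t ∈ C n)
    (hright : ∀ i j, ∀ x ∈ C i, ∀ y ∈ S.gr j, S.mul x y ∈ C (i + j))
    (hleft : ∀ i j, ∀ x ∈ C i, ∀ y ∈ S.gr j, S.mul y x ∈ C (j + i)) :
    idealGen S T ≤ ⨆ n, C n := by
  refine sInf_le ⟨fun t ht ↦ ?_, fun x hx y ↦ ?_⟩
  · obtain ⟨n, hn⟩ := hT t ht
    exact Submodule.mem_iSup_of_mem n hn
  · have hy : y ∈ ⨆ n, S.gr n := S.iSup_gr_eq_top ▸ Submodule.mem_top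
    exact ⟨apply_mem_iSup_of_mem S.mul (fun i j x hx y hy ↦ ⟨_, hright i j x hx y hy⟩) hx hy,
      apply_mem_iSup_of_mem S.mul.flip (fun i j x hx y hy ↦ ⟨_, hleft i j x hx y hy⟩) hx hy⟩

theorem idealGen_le_iSup_inf_comap_d (hT : ∀ t ∈ T, ∃ n, t ∈ S.gr n)
    (hd : ∀ t ∈ T, S.d t ∈ idealGen S T) :
    idealGen S T ≤ ⨆ n, idealGen S T ⊓ (idealGen S T).comap S.d ⊓ S.gr n := by
  refine idealGen_le_iSup S (fun t ht ↦ ?_) ?_ ?_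
  · obtain ⟨n, hn⟩ := hT t ht
    exact ⟨n, ⟨subset_idealGen S ht, hd t ht⟩, hn⟩
  · rintro i j x ⟨⟨hxI, hdx⟩, hx⟩ y hy
    refine ⟨⟨idealGen_mul_mem_right S hxI y, ?_⟩, S.mul_mem hx hy⟩
    rw [SetLike.mem_coe, Submodule.mem_comap, S.d_mul hx hy]
    exact add_mem (idealGen_mul_mem_right S hdx y)
      (Submodule.smul_mem _ _ (idealGen_mul_mem_right S hxI (S.d y)))
  · rintro i j x ⟨⟨hxI, hdx⟩, hx⟩ y hy
    refine ⟨⟨idealGen_mul_mem_left S hxI y, ?_⟩, S.mul_mem hy hx⟩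
    rw [SetLike.mem_coe, Submodule.mem_comap, S.d_mul hy hx]
    exact add_mem (idealGen_mul_mem_left S hxI (S.d y))
      (Submodule.smul_mem _ _ (idealGen_mul_mem_left S hdx y))

theorem isDGIdeal_idealGen (hT : ∀ t ∈ T, ∃ n, t ∈ S.gr n)
    (hd : ∀ t ∈ T, S.d t ∈ idealGen S T) : IsDGIdeal S (idealGen S T) where
  le_iSup_inf_gr := (idealGen_le_iSup_inf_comap_d S hT hd).trans <|
    iSup_mono fun _ ↦ inf_le_inf_right _ inf_le_left
  d_mem := (idealGen_le_iSup_inf_comap_d S hT hd).trans <|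
    iSup_le fun _ ↦ inf_le_left.trans inf_le_right
  mul_mem_right _ hx y := idealGen_mul_mem_right S hx y
  mul_mem_left _ hx y := idealGen_mul_mem_left S hx y

end DGIdeal

section SmashGenerators

variable {k : Type u} [Field k] {M : Type u} [AddCommGroup M] [Module k M]

theorem DGPAOn.d_one (P : DGPAOn k M) : P.d P.one = 0 := by
  simpa [P.one_mul, P.mul_one] using P.d_mul P.one_mem P.one_mem

/-- The generator `1#(ab) - a#b - (-1)^{ij} b#a` of the ideal defining `A^E`, where `i` and `j`
stand for the degrees of `a` and `b`. -/
def smashGen (P : DGPAOn k M) (i j : ℤ) (a b : M) : M ⊗[k] ULie P.toLie :=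
  P.one ⊗ₜ[k] uGen P.toLie (P.mul a b) - a ⊗ₜ[k] uGen P.toLie b -
    ((-1 : k) ^ (i * j)) • (b ⊗ₜ[k] uGen P.toLie a)

variable {P : DGPAOn k M} {EU : DGAOn k (ULie P.toLie)} {S : DGAOn k (M ⊗[k] ULie P.toLie)}
  {i j : ℤ} {a b : M}

theorem smashGen_mem_smashGens (ha : a ∈ P.gr i) (hb : b ∈ P.gr j) :
    smashGen P i j a b ∈ smashGens P :=
  ⟨i, j, a, b, ha, hb, rfl⟩

theorem tmul_uGen_mem_gr (hEU : IsULieDGA P.toLie EU) (hS : IsSmash P EU S)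
    (ha : a ∈ P.gr i) (hb : b ∈ P.gr j) : a ⊗ₜ[k] uGen P.toLie b ∈ S.gr (i + j) := by
  obtain ⟨-, -, uGen_mem, -⟩ := hEU
  obtain ⟨-, -, -, -, -, tmul_mem, -⟩ := hS
  exact tmul_mem ha (uGen_mem hb)

theorem d_tmul_uGen (hEU : IsULieDGA P.toLie EU) (hS : IsSmash P EU S)
    (ha : a ∈ P.gr i) (b : M) :
    S.d (a ⊗ₜ[k] uGen P.toLie b) =
      P.d a ⊗ₜ[k] uGen P.toLie b + ((-1 : k) ^ i) • (a ⊗ₜ[k] uGen P.toLie (P.d b)) := by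
  obtain ⟨-, -, -, d_uGen⟩ := hEU
  obtain ⟨-, -, -, -, -, -, d_tmul⟩ := hS
  rw [d_tmul ha, d_uGen]
  rfl

theorem d_one_tmul_uGen (hEU : IsULieDGA P.toLie EU) (hS : IsSmash P EU S) (a : M) :
    S.d (P.one ⊗ₜ[k] uGen P.toLie a) = P.one ⊗ₜ[k] uGen P.toLie (P.d a) := by
  rw [d_tmul_uGen hEU hS P.one_mem, P.d_one, TensorProduct.zero_tmul, zero_add, zpow_zero,
    one_smul]

theorem smashGen_mem_gr (hEU : IsULieDGA P.toLie EU) (hS : IsSmash P EU S)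
    (ha : a ∈ P.gr i) (hb : b ∈ P.gr j) : smashGen P i j a b ∈ S.gr (i + j) := by
  refine sub_mem (sub_mem ?_ (tmul_uGen_mem_gr hEU hS ha hb)) (Submodule.smul_mem _ _ ?_)
  · simpa only [zero_add] using tmul_uGen_mem_gr hEU hS P.one_mem (P.mul_mem ha hb)
  · exact add_comm j i ▸ tmul_uGen_mem_gr hEU hS hb ha

theorem d_smashGen (hEU : IsULieDGA P.toLie EU) (hS : IsSmash P EU S)
    (ha : a ∈ P.gr i) (hb : b ∈ P.gr j) :
    S.d (smashGen P i j a b) =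
      smashGen P (i + 1) j (P.d a) b + ((-1 : k) ^ i) • smashGen P i (j + 1) a (P.d b) := by
  have hsq : (-1 : k) ^ i * (-1 : k) ^ i = 1 := by rw [← mul_zpow]; simp
  have hleft : (-1 : k) ^ ((i + 1) * j) = (-1 : k) ^ (i * j) * (-1 : k) ^ j := by
    rw [add_mul, _root_.one_mul, zpow_add₀ (neg_ne_zero.2 one_ne_zero)]
  have hright : (-1 : k) ^ i * (-1 : k) ^ (i * (j + 1)) = (-1 : k) ^ (i * j) := by
    rw [mul_add, _root_.mul_one, zpow_add₀ (neg_ne_zero.2 one_ne_zero)]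
    linear_combination (-1 : k) ^ (i * j) * hsq
  simp only [smashGen, map_sub, map_smul, d_one_tmul_uGen hEU hS, d_tmul_uGen hEU hS ha,
    d_tmul_uGen hEU hS hb, P.d_mul ha hb, map_add, TensorProduct.tmul_add,
    TensorProduct.tmul_smul, smul_add, smul_sub, smul_smul, hleft, hright]
  abel

theorem isDGIdeal_idealGen_smashGens (hEU : IsULieDGA P.toLie EU) (hS : IsSmash P EU S) :
    IsDGIdeal S (idealGen S (smashGens P)) := by
  refine isDGIdeal_idealGen S ?_ ?_
  · rintro _ ⟨i, j, a, b, ha, hb, rfl⟩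
    exact ⟨i + j, smashGen_mem_gr hEU hS ha hb⟩
  · rintro _ ⟨i, j, a, b, ha, hb, rfl⟩
    have hda := subset_idealGen S (smashGen_mem_smashGens (P.d_mem ha) hb)
    have hdb := subset_idealGen S (smashGen_mem_smashGens ha (P.d_mem hb))
    exact (d_smashGen hEU hS ha hb).symm ▸ add_mem hda (Submodule.smul_mem _ _ hdb)

end SmashGenerators

/-- in the smash product `A # U(A)`, the two-sided ideal generated by the
elements `1#(ab) - a#b - (-1)^{|a||b|} b#a` is a differential ideal, and consequently the
quotient `A^E` carries a differential graded algebra structure. -/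
theorem stmt_8 (k : Type u) [Field k] (M : Type u) [AddCommGroup M] [Module k M]
    (P : DGPAOn k M)
    (EU : DGAOn k (ULie P.toLie)) (hEU : IsULieDGA P.toLie EU)
    (S : DGAOn k (M ⊗[k] ULie P.toLie)) (hS : IsSmash P EU S) :
    (∀ x ∈ idealGen S (smashGens P), S.d x ∈ idealGen S (smashGens P)) ∧
    ∃ R : DGAOn k ((M ⊗[k] ULie P.toLie) ⧸ idealGen S (smashGens P)),
      IsQuotDGA S (idealGen S (smashGens P)) R := by
  have hI := isDGIdeal_idealGen_smashGens hEU hS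
  exact ⟨hI.d_mem, hI.quotient, hI.isQuotDGA_quotient⟩

end DGPaper

end
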